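/- Let 1 ≤ k ≤ n, suppose E_1, …, E_k have cotype 2, and let p_{k+1}, …, p_n ∈ [1,∞] be arbitrary. If p ≤ q and 1 ≤ q_i ≤ 2 for i = 1,…,k satisfy Σ_{i=1}^k 1/q_i − 1/q = k − 1/p, then for every Banach space F, a continuous n-linear map A : E_1 × ⋯ × E_n → F is absolutely (p;1,…,1,p_{k+1},…,p_n)-summing if and only if it is absolutely (q;q_1,…,q_k,p_{k+1},…,p_n)-summing. -/

import Mathlib

open scoped BigOperators NNReal ENNReal

/-- The Rademacher norm of a finite family `(x_j)_{j=1}^m` in a normed space: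
`(2^{-m} ∑_{ε ∈ {-1,1}^m} ‖∑_j ε_j x_j‖²)^{1/2}`. -/
noncomputable def radNorm {E : Type*} [NormedAddCommGroup E] {m : ℕ} (x : Fin m → E) : ℝ :=
  ((∑ ε : Fin m → Bool, ‖∑ j, (if ε j then x j else -x j)‖ ^ 2) / (2 : ℝ) ^ m) ^ ((1 : ℝ) / 2)

/-- A Banach space has cotype 2. -/
def HasCotype2 (X : Type*) [NormedAddCommGroup X] : Prop :=
  ∃ C > 0, ∀ (m : ℕ) (x : Fin m → X),
    (∑ j, ‖x j‖ ^ 2) ^ ((1 : ℝ) / 2) ≤ C * radNorm x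

/-- The `ℓ_p` norm of a finite family, for an extended-real exponent `p ∈ (0, ∞]`
(with the sup-norm interpretation when `p = ∞`). -/
noncomputable def lpNormE {F : Type*} [NormedAddCommGroup F] (p : ℝ≥0∞) {m : ℕ}
    (y : Fin m → F) : ℝ :=
  if p = ∞ then ⨆ j, ‖y j‖ else (∑ j, ‖y j‖ ^ p.toReal) ^ (1 / p.toReal)

/-- The weak `ℓ_r` norm of a finite family, for an extended-real exponent `r ∈ (0, ∞]`
(with the interpretation `max_j ‖x_j‖` when `r = ∞`). -/
noncomputable def weakNormE (𝕜 : Type*) [RCLike 𝕜] {E : Type*} [NormedAddCommGroup E]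
    [NormedSpace 𝕜 E] (r : ℝ≥0∞) {m : ℕ} (x : Fin m → E) : ℝ :=
  if r = ∞ then ⨆ j, ‖x j‖
  else ⨆ φ : {φ : E →L[𝕜] 𝕜 // ‖φ‖ ≤ 1}, (∑ j, ‖φ.1 (x j)‖ ^ r.toReal) ^ (1 / r.toReal)

/-- A continuous multilinear map is absolutely `(p; p₁, …, pₙ)`-summing, for
extended-real exponents. -/
def IsAbsSummingE {𝕜 : Type*} [RCLike 𝕜] {n : ℕ} {E : Fin n → Type*}
    [∀ i, NormedAddCommGroup (E i)] [∀ i, NormedSpace 𝕜 (E i)]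
    {F : Type*} [NormedAddCommGroup F] [NormedSpace 𝕜 F]
    (p : ℝ≥0∞) (ps : Fin n → ℝ≥0∞) (A : ContinuousMultilinearMap 𝕜 E F) : Prop :=
  ∃ C > 0, ∀ (m : ℕ) (x : ∀ i, Fin m → E i),
    lpNormE p (fun j => A (fun i => x i j)) ≤ C * ∏ i, weakNormE 𝕜 (ps i) (x i)


/-- The Hölder inequality in log-convex form. -/
lemma aux_holder {m : ℕ} (a b : Fin m → ℝ) (ha : ∀ j, 0 ≤ a j) (hb : ∀ j, 0 ≤ b j)
    (α β : ℝ) (hα : 0 ≤ α) (hβ : 0 ≤ β) (hαβ : α + β = 1) :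
    ∑ j, a j ^ α * b j ^ β ≤ (∑ j, a j) ^ α * (∑ j, b j) ^ β := by
  rcases hα.eq_or_lt with h | hα'
  · subst h
    have : β = 1 := by linarith
    subst this; simp
  rcases hβ.eq_or_lt with h | hβ'
  · subst h
    have : α = 1 := by linarith
    subst this; simp
  have hc : (1/α).HolderConjugate (1/β) := by
    rw [Real.holderConjugate_iff]
    refine ⟨?_, by simpa using hαβ⟩
    rw [lt_div_iff₀ hα']; linarith
  have := Real.inner_le_Lp_mul_Lq_of_nonneg Finset.univ hc (f := fun j => a j ^ α)
    (g := fun j => b j ^ β) (fun j _ => Real.rpow_nonneg (ha j) _)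
    (fun j _ => Real.rpow_nonneg (hb j) _)
  have h1 : ∀ j, (a j ^ α) ^ (1/α) = a j := fun j => by
    rw [← Real.rpow_mul (ha j), mul_one_div_cancel hα'.ne', Real.rpow_one]
  have h2 : ∀ j, (b j ^ β) ^ (1/β) = b j := fun j => by
    rw [← Real.rpow_mul (hb j), mul_one_div_cancel hβ'.ne', Real.rpow_one]
  simp only [h1, h2, one_div_one_div] at this
  exact this

lemma aux_sum_bool_succ {N : ℕ} (g : (Fin (N+1) → Bool) → ℝ) :
    ∑ ε, g ε = ∑ ε : Fin N → Bool, (g (Fin.cons true ε) + g (Fin.cons false ε)) := by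
  rw [← (Fin.consEquiv (fun _ => Bool)).sum_comp, Fintype.sum_prod_type]
  simp [Fin.consEquiv, Finset.sum_add_distrib]

/-- Khinchine: second and fourth moments. -/
lemma aux_khinchine {𝕜 : Type*} [RCLike 𝕜] (N : ℕ) (a : Fin N → 𝕜) :
    (∑ ε : Fin N → Bool, ‖∑ k, (if ε k then a k else -a k)‖ ^ 2) = 2 ^ N * ∑ k, ‖a k‖ ^ 2 ∧
    (∑ ε : Fin N → Bool, ‖∑ k, (if ε k then a k else -a k)‖ ^ 4)
      ≤ 2 ^ N * (3 * (∑ k, ‖a k‖ ^ 2) ^ 2) := by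
  induction N with
  | zero => simp
  | succ N ih =>
    obtain ⟨h2, h4⟩ := ih (fun k => a k.succ)
    have hsum : ∀ (b : Bool) (ε : Fin N → Bool),
        (∑ k, (if (Fin.cons b ε : Fin (N+1) → Bool) k then a k else -a k)) =
        (if b then a 0 else -a 0) + ∑ k : Fin N, (if ε k then a k.succ else -a k.succ) := by
      intro b ε
      rw [Fin.sum_univ_succ]; simp
    have par : ∀ s : 𝕜, ‖a 0 + s‖ ^ 2 + ‖-a 0 + s‖ ^ 2 = 2 * ‖s‖ ^ 2 + 2 * ‖a 0‖ ^ 2 := by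
      intro s
      have h1 := parallelogram_law_with_norm 𝕜 s (a 0)
      have e1 : a 0 + s = s + a 0 := add_comm _ _
      have e2 : -a 0 + s = s - a 0 := by ring
      rw [e1, e2]; nlinarith
    have par4 : ∀ s : 𝕜, ‖a 0 + s‖ ^ 4 + ‖-a 0 + s‖ ^ 4 ≤
        2 * ‖s‖ ^ 4 + 12 * ‖a 0‖ ^ 2 * ‖s‖ ^ 2 + 2 * ‖a 0‖ ^ 4 := by
      intro s
      have h0 := par s
      set P := ‖a 0 + s‖ with hP
      set M := ‖-a 0 + s‖ with hM
      have hp : 0 ≤ P := norm_nonneg _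
      have hm : 0 ≤ M := norm_nonneg _
      have h1 : P ≤ ‖a 0‖ + ‖s‖ := norm_add_le _ _
      have h2 : M ≤ ‖a 0‖ + ‖s‖ := by simpa using norm_add_le (-a 0) s
      have ha := norm_nonneg (a 0)
      have hs := norm_nonneg s
      generalize ‖a 0‖ = x at *
      generalize ‖s‖ = y at *
      have h3 : P ^ 2 ≤ (x + y) ^ 2 := by gcongr
      have h4 : M ^ 2 ≤ (x + y) ^ 2 := by gcongr
      have e : M ^ 2 = 2 * y ^ 2 + 2 * x ^ 2 - P ^ 2 := by linarith
      have h5 : 0 ≤ ((x + y) ^ 2 - P ^ 2) * ((x+y)^2 - M ^ 2) :=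
        mul_nonneg (by linarith) (by linarith)
      have e4 : M ^ 4 = (M ^ 2) ^ 2 := by ring
      have e5 : P ^ 4 = (P ^ 2) ^ 2 := by ring
      rw [e4, e5]
      rw [e] at h5 ⊢
      nlinarith
    rw [aux_sum_bool_succ, aux_sum_bool_succ, Fin.sum_univ_succ (fun k => ‖a k‖ ^ 2)]
    simp only [hsum, if_true, Bool.false_eq_true, if_false]
    constructor
    · rw [Finset.sum_congr rfl (fun ε _ => par _), Finset.sum_add_distrib, ← Finset.mul_sum, h2]
      simp [pow_succ]; ring
    · refine (Finset.sum_le_sum (fun ε _ => par4 _)).trans ?_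
      rw [Finset.sum_add_distrib, Finset.sum_add_distrib, ← Finset.mul_sum, ← Finset.mul_sum, h2]
      simp only [Finset.sum_const, Finset.card_univ, Fintype.card_fun, Fintype.card_bool,
        Fintype.card_fin, nsmul_eq_mul, Nat.cast_pow, Nat.cast_ofNat]
      have : (0:ℝ) ≤ 2 ^ N * ‖a 0‖ ^ 4 := by positivity
      rw [pow_succ (2 : ℝ) N]
      nlinarith

section core

variable {𝕜 : Type*} [RCLike 𝕜] {E : Type*} [NormedAddCommGroup E] [NormedSpace 𝕜 E]

/-- The operator `ℓ_∞^m → E` given by `x` is 2-summing with squared constant `K`. -/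
def AuxP (𝕜 : Type*) [RCLike 𝕜] {E : Type*} [NormedAddCommGroup E] [NormedSpace 𝕜 E]
    {m : ℕ} (x : Fin m → E) (K : ℝ) : Prop :=
  ∀ (N : ℕ) (f : Fin N → Fin m → 𝕜) (R : ℝ), 0 ≤ R → (∀ j, ∑ k, ‖f k j‖ ^ 2 ≤ R) →
    ∑ k, ‖∑ j, f k j • x j‖ ^ 2 ≤ K * R

lemma aux_unif {m : ℕ} (x : Fin m → E) (B : ℝ)
    (hB : ∀ φ : E →L[𝕜] 𝕜, ‖φ‖ ≤ 1 → ∑ j, ‖φ (x j)‖ ≤ B) (f : Fin m → 𝕜) (t : ℝ)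
    (ht : 0 ≤ t) (hf : ∀ j, ‖f j‖ ≤ t) : ‖∑ j, f j • x j‖ ≤ t * B := by
  obtain ⟨φ, hφ, hv⟩ := exists_dual_vector'' 𝕜 (∑ j, f j • x j)
  have h1 : ‖∑ j, f j • x j‖ = ‖φ (∑ j, f j • x j)‖ := by rw [hv]; simp
  rw [h1, map_sum]
  refine (norm_sum_le _ _).trans ?_
  refine le_trans ?_ (mul_le_mul_of_nonneg_left (hB φ hφ) ht)
  rw [Finset.mul_sum]
  gcongr with j
  rw [map_smul, norm_smul]
  gcongr
  exact hf j

lemma aux_pietsch {m : ℕ} (hm : 0 < m) (x : Fin m → E) (K : ℝ)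
    (hP : AuxP 𝕜 x K) : ∃ μ : Fin m → ℝ, (∀ j, 0 ≤ μ j) ∧ ∑ j, μ j = 1 ∧
      ∀ f : Fin m → 𝕜, ‖∑ j, f j • x j‖ ^ 2 ≤ K * ∑ j, μ j * ‖f j‖ ^ 2 := by
  have : Nonempty (Fin m) := ⟨⟨0, hm⟩⟩
  let O : Set (Fin m → ℝ) := {v | ∀ j, v j < 0}
  let D : Set (Fin m → ℝ) := {v | ∃ (N : ℕ) (f : Fin N → Fin m → 𝕜),
    v = fun j => K * ∑ k, ‖f k j‖ ^ 2 - ∑ k, ‖∑ j, f k j • x j‖ ^ 2}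
  have hOo : IsOpen O := by
    have : O = ⋂ j, {v | v j < 0} := by ext; simp [O]
    rw [this]
    exact isOpen_iInter_of_finite fun j => isOpen_lt (continuous_apply j) continuous_const
  have hOc : Convex ℝ O := by
    intro u hu v hv a b ha hb hab j
    have h1 := hu j
    have h2 := hv j
    simp only [Pi.add_apply, Pi.smul_apply, smul_eq_mul]
    rcases ha.eq_or_lt with h | h
    · subst h
      have : b = 1 := by linarith
      subst this; simpa using h2
    · have := mul_neg_of_pos_of_neg h h1
      have := mul_nonpos_of_nonneg_of_nonpos hb h2.le
      linarith
  have hDadd : ∀ u ∈ D, ∀ v ∈ D, u + v ∈ D := by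
    rintro u ⟨N, f, rfl⟩ v ⟨N', f', rfl⟩
    refine ⟨N + N', Fin.append f f', ?_⟩
    ext j
    simp only [Fin.sum_univ_add, Fin.append_left, Fin.append_right, Pi.add_apply]
    ring
  have hDsm : ∀ u ∈ D, ∀ a : ℝ, 0 ≤ a → a • u ∈ D := by
    rintro u ⟨N, f, rfl⟩ a ha
    refine ⟨N, fun k j => ((Real.sqrt a : ℝ) : 𝕜) * f k j, ?_⟩
    have hs : ‖((Real.sqrt a : ℝ) : 𝕜)‖ ^ 2 = a := by
      rw [RCLike.norm_ofReal, sq_abs, Real.sq_sqrt ha]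
    ext j
    simp only [mul_smul, ← Finset.smul_sum, norm_smul, norm_mul, mul_pow, hs, ← Finset.mul_sum,
      Pi.smul_apply, smul_eq_mul]
    ring
  have hDc : Convex ℝ D := fun u hu v hv a b ha hb _ =>
    hDadd _ (hDsm u hu a ha) _ (hDsm v hv b hb)
  have hdisj : Disjoint O D := by
    rw [Set.disjoint_left]
    rintro v hv ⟨N, f, rfl⟩
    obtain ⟨j0, hj0⟩ := Finite.exists_max (fun j => ∑ k, ‖f k j‖ ^ 2)
    have h1 := hP N f (∑ k, ‖f k j0‖ ^ 2) (Finset.sum_nonneg fun _ _ => by positivity) hj0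
    have h2 := hv j0
    simp only at h2
    linarith
  obtain ⟨φ, u, hφO, hφD⟩ := geometric_hahn_banach_open hOc hOo hDc hdisj
  have hu0 : u ≤ 0 := by
    have := hφD 0 ⟨0, Fin.elim0, by ext; simp⟩
    simpa using this
  let c : Fin m → ℝ := fun j => φ (Pi.single j 1)
  have hφc : ∀ v, φ v = ∑ j, v j * c j := by
    intro v
    conv_lhs => rw [← Finset.univ_sum_single v]
    rw [map_sum]
    refine Finset.sum_congr rfl fun j _ => ?_
    have : (Pi.single j (v j) : Fin m → ℝ) = v j • Pi.single j 1 := by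
      rw [← Pi.single_smul]; simp
    rw [this, map_smul]; rfl
  have hcs : 0 < ∑ j, c j := by
    have := hφO (fun _ => -1) (fun _ => by norm_num)
    rw [hφc] at this
    simp at this
    linarith
  have hu : 0 ≤ u := by
    by_contra! hneg
    have := hφO (fun _ => u / (2 * ∑ j, c j)) (fun _ => by
      apply div_neg_of_neg_of_pos hneg; positivity)
    rw [hφc, ← Finset.mul_sum] at this
    have e : u / (2 * ∑ j, c j) * ∑ j, c j = u / 2 := by field_simp
    rw [e] at this
    linarith
  have hc : ∀ j, 0 ≤ c j := by
    intro i
    by_contra! hneg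
    have := hφO (fun j => -(Pi.single i 1 : Fin m → ℝ) j + c i / (2 * ∑ j, c j)) (fun j => by
      have : c i / (2 * ∑ j, c j) < 0 := by apply div_neg_of_neg_of_pos hneg; positivity
      have h2 : 0 ≤ (Pi.single i 1 : Fin m → ℝ) j := by
        by_cases h : j = i
        · subst h; simp
        · simp [h]
      linarith)
    rw [hφc] at this
    simp only [add_mul, Finset.sum_add_distrib, ← Finset.mul_sum] at this
    have e : c i / (2 * ∑ j, c j) * ∑ j, c j = c i / 2 := by field_simp
    rw [e] at this
    simp [Pi.single_apply] at this
    linarith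
  refine ⟨fun j => c j / ∑ j, c j, fun j => div_nonneg (hc j) hcs.le, ?_, ?_⟩
  · rw [← Finset.sum_div, div_self hcs.ne']
  · intro f
    have h := hφD _ ⟨1, fun _ => f, rfl⟩
    rw [hφc] at h
    simp only [Finset.univ_unique, Finset.sum_singleton, sub_mul, Finset.sum_sub_distrib,
      ← Finset.mul_sum] at h
    have e : ∑ j, c j / (∑ j, c j) * ‖f j‖ ^ 2 = (∑ j, c j * ‖f j‖ ^ 2) / ∑ j, c j := by
      rw [Finset.sum_div]; exact Finset.sum_congr rfl fun j _ => by ring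
    rw [e, ← mul_div_assoc, le_div_iff₀ hcs]
    have e2 : ∑ j, K * ‖f j‖ ^ 2 * c j = K * ∑ j, c j * ‖f j‖ ^ 2 := by
      rw [Finset.mul_sum]; exact Finset.sum_congr rfl fun j _ => by ring
    linarith

lemma aux_trunc {m : ℕ} (x : Fin m → E) (B : ℝ)
    (hB : ∀ φ : E →L[𝕜] 𝕜, ‖φ‖ ≤ 1 → ∑ j, ‖φ (x j)‖ ≤ B) (K : ℝ) (hK : 0 ≤ K)
    (μ : Fin m → ℝ) (hμ : ∀ j, 0 ≤ μ j)
    (hμK : ∀ f : Fin m → 𝕜, ‖∑ j, f j • x j‖ ^ 2 ≤ K * ∑ j, μ j * ‖f j‖ ^ 2)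
    (s : ℝ) (hs : 0 < s) (f : Fin m → 𝕜) :
    ‖∑ j, f j • x j‖ ^ 2 ≤ 2 * (B ^ 2 * s) + 2 * (K * (∑ j, μ j * ‖f j‖ ^ 4) / s) := by
  classical
  have hB0 : 0 ≤ B := by simpa using hB 0 (by simp)
  let g : Fin m → 𝕜 := fun j => if ‖f j‖ ^ 2 ≤ s then f j else 0
  let h : Fin m → 𝕜 := fun j => if ‖f j‖ ^ 2 ≤ s then 0 else f j
  have hsum : ∑ j, f j • x j = ∑ j, g j • x j + ∑ j, h j • x j := by
    rw [← Finset.sum_add_distrib]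
    refine Finset.sum_congr rfl fun j _ => ?_
    simp only [g, h]; split_ifs <;> simp
  have h1 : ‖∑ j, g j • x j‖ ≤ Real.sqrt s * B := by
    refine aux_unif x B hB g _ (Real.sqrt_nonneg _) fun j => ?_
    simp only [g]; split_ifs with hj
    · exact Real.le_sqrt_of_sq_le hj
    · simp
  have h1' : ‖∑ j, g j • x j‖ ^ 2 ≤ B ^ 2 * s := by
    calc _ ≤ (Real.sqrt s * B) ^ 2 := by gcongr
      _ = _ := by rw [mul_pow, Real.sq_sqrt hs.le]; ring
  have h2 : ‖∑ j, h j • x j‖ ^ 2 ≤ K * (∑ j, μ j * ‖f j‖ ^ 4) / s := by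
    refine (hμK h).trans ?_
    rw [mul_div_assoc, Finset.sum_div]
    gcongr with j
    rw [mul_div_assoc]
    refine mul_le_mul_of_nonneg_left ?_ (hμ j)
    simp only [h]; split_ifs with hj
    · simp; positivity
    · rw [le_div_iff₀ hs]
      nlinarith [sq_nonneg (‖f j‖)]
  have h3 : ‖∑ j, f j • x j‖ ≤ ‖∑ j, g j • x j‖ + ‖∑ j, h j • x j‖ := by
    rw [hsum]; exact norm_add_le _ _
  have h4 : ‖∑ j, f j • x j‖ ^ 2 ≤ (‖∑ j, g j • x j‖ + ‖∑ j, h j • x j‖) ^ 2 := by gcongr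
  nlinarith [sq_nonneg (‖∑ j, g j • x j‖ - ‖∑ j, h j • x j‖)]

lemma aux_improve {m : ℕ} (hm : 0 < m) (x : Fin m → E) (B : ℝ)
    (hB : ∀ φ : E →L[𝕜] 𝕜, ‖φ‖ ≤ 1 → ∑ j, ‖φ (x j)‖ ≤ B) (C : ℝ) (hC : 0 < C)
    (hcot : ∀ (N : ℕ) (y : Fin N → E), ∑ k, ‖y k‖ ^ 2 ≤
      C * ((∑ ε : Fin N → Bool, ‖∑ k, (if ε k then y k else -y k)‖ ^ 2) / 2 ^ N))
    (K : ℝ) (hK : 0 ≤ K) (hP : AuxP 𝕜 x K) : AuxP 𝕜 x (24 * C ^ 2 * B ^ 2 + K / 2) := by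
  obtain ⟨μ, hμ, hμ1, hμK⟩ := aux_pietsch hm x K hP
  intro N f R hR hf
  rcases hR.eq_or_lt with h0 | hR
  · subst h0
    have : ∀ k j, f k j = 0 := by
      intro k j
      have h1 := (Finset.single_le_sum (f := fun k => ‖f k j‖ ^ 2)
        (fun k _ => by positivity) (Finset.mem_univ k)).trans (hf j)
      have h2 : ‖f k j‖ ^ 2 = 0 := le_antisymm h1 (by positivity)
      simpa using h2
    simp [this]
  let s := 12 * C * R
  have hs : 0 < s := by positivity
  let S : (Fin N → Bool) → Fin m → 𝕜 := fun ε j => ∑ k, (if ε k then f k j else -f k j)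
  have e1 : ∀ ε : Fin N → Bool, (∑ k, (if ε k then (∑ j, f k j • x j) else -(∑ j, f k j • x j)))
      = ∑ j, S ε j • x j := by
    intro ε
    simp only [S, Finset.sum_smul]
    rw [Finset.sum_comm]
    refine Finset.sum_congr rfl fun k _ => ?_
    split_ifs <;> simp
  have h1 := hcot N (fun k => ∑ j, f k j • x j)
  simp only [e1] at h1
  have h4 : ∑ ε, ∑ j, μ j * ‖S ε j‖ ^ 4 ≤ 2 ^ N * (3 * R ^ 2) := by
    rw [Finset.sum_comm]
    calc _ = ∑ j, μ j * ∑ ε, ‖S ε j‖ ^ 4 := by simp only [Finset.mul_sum]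
      _ ≤ ∑ j, μ j * (2 ^ N * (3 * R ^ 2)) := by
        refine Finset.sum_le_sum fun j _ => mul_le_mul_of_nonneg_left ?_ (hμ j)
        refine (aux_khinchine N (fun k => f k j)).2.trans ?_
        have := hf j
        gcongr
      _ = _ := by rw [← Finset.sum_mul, hμ1, one_mul]
  have h2 : ∑ ε, ‖∑ j, S ε j • x j‖ ^ 2 ≤
      2 ^ N * (2 * (B ^ 2 * s)) + 2 * (K * (2 ^ N * (3 * R ^ 2)) / s) := by
    refine (Finset.sum_le_sum fun ε _ => aux_trunc x B hB K hK μ hμ hμK s hs (S ε)).trans ?_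
    have e' : ∑ ε, 2 * (K * (∑ j, μ j * ‖S ε j‖ ^ 4) / s) =
        2 * (K * (∑ ε, ∑ j, μ j * ‖S ε j‖ ^ 4) / s) := by
      rw [← Finset.mul_sum, ← Finset.sum_div, ← Finset.mul_sum]
    rw [Finset.sum_add_distrib, e']
    simp only [Finset.sum_const, Finset.card_univ, Fintype.card_fun, Fintype.card_bool,
        Fintype.card_fin, nsmul_eq_mul, Nat.cast_pow, Nat.cast_ofNat]
    gcongr
  refine h1.trans ?_
  calc _ ≤ C * ((2 ^ N * (2 * (B ^ 2 * s)) + 2 * (K * (2 ^ N * (3 * R ^ 2)) / s)) / 2 ^ N) := by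
        gcongr
    _ = _ := by simp only [s]; field_simp; ring

lemma aux_factor {m : ℕ} (hm : 0 < m) (x : Fin m → E) (B : ℝ)
    (hB : ∀ φ : E →L[𝕜] 𝕜, ‖φ‖ ≤ 1 → ∑ j, ‖φ (x j)‖ ≤ B) (C : ℝ) (hC : 0 < C)
    (hcot : ∀ (N : ℕ) (y : Fin N → E), ∑ k, ‖y k‖ ^ 2 ≤
      C * ((∑ ε : Fin N → Bool, ‖∑ k, (if ε k then y k else -y k)‖ ^ 2) / 2 ^ N)) :
    AuxP 𝕜 x (48 * C ^ 2 * B ^ 2) := by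
  have hB0 : 0 ≤ B := by simpa using hB 0 (by simp)
  have hstart : AuxP 𝕜 x (B ^ 2 * m) := by
    intro N f R hR hf
    calc ∑ k, ‖∑ j, f k j • x j‖ ^ 2 ≤ ∑ k, B ^ 2 * ∑ j, ‖f k j‖ ^ 2 := by
          gcongr with k
          have hn : 0 ≤ ∑ j, ‖f k j‖ ^ 2 := Finset.sum_nonneg fun _ _ => by positivity
          have := aux_unif x B hB (f k) (Real.sqrt (∑ j, ‖f k j‖ ^ 2)) (Real.sqrt_nonneg _)
            (fun j => Real.le_sqrt_of_sq_le (Finset.single_le_sum (f := fun j => ‖f k j‖ ^ 2)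
              (fun j _ => by positivity) (Finset.mem_univ j)))
          calc _ ≤ (Real.sqrt (∑ j, ‖f k j‖ ^ 2) * B) ^ 2 := by gcongr
            _ = _ := by rw [mul_pow, Real.sq_sqrt hn]; ring
      _ = B ^ 2 * ∑ j, ∑ k, ‖f k j‖ ^ 2 := by rw [← Finset.mul_sum, Finset.sum_comm]
      _ ≤ B ^ 2 * ∑ j : Fin m, R := by gcongr with j; exact hf j
      _ = _ := by simp; ring
  have hit : ∀ n : ℕ, AuxP 𝕜 x (48 * C ^ 2 * B ^ 2 + B ^ 2 * m * (1/2) ^ n) := by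
    intro n
    induction n with
    | zero =>
      intro N f R hR hf
      refine (hstart N f R hR hf).trans ?_
      gcongr
      simp; positivity
    | succ n ih =>
      have := aux_improve hm x B hB C hC hcot _ (by positivity) ih
      convert this using 1
      rw [pow_succ]; ring
  intro N f R hR hf
  have ht : Filter.Tendsto (fun n : ℕ => (48 * C ^ 2 * B ^ 2 + B ^ 2 * m * (1/2) ^ n) * R)
      Filter.atTop (nhds ((48 * C ^ 2 * B ^ 2 + B ^ 2 * m * 0) * R)) := by
    refine Filter.Tendsto.mul_const _ (Filter.Tendsto.const_add _ (Filter.Tendsto.const_mul _ ?_))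
    exact tendsto_pow_atTop_nhds_zero_of_lt_one (by norm_num) (by norm_num)
  have := ge_of_tendsto' ht (fun n => hit n N f R hR hf)
  simpa using this

end core

section weak

variable {𝕜 : Type*} [RCLike 𝕜] {E : Type*} [NormedAddCommGroup E] [NormedSpace 𝕜 E]

lemma aux_weak_nonneg (r : ℝ≥0∞) {m : ℕ} (x : Fin m → E) : 0 ≤ weakNormE 𝕜 r x := by
  unfold weakNormE
  split_ifs
  · exact Real.iSup_nonneg fun j => norm_nonneg _
  · exact Real.iSup_nonneg fun φ => Real.rpow_nonneg
      (Finset.sum_nonneg fun j _ => Real.rpow_nonneg (norm_nonneg _) _) _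

lemma aux_le_weak (q : ℝ) (hq : 0 < q) {m : ℕ} (x : Fin m → E) (φ : E →L[𝕜] 𝕜) (hφ : ‖φ‖ ≤ 1) :
    (∑ j, ‖φ (x j)‖ ^ q) ^ (1 / q) ≤ weakNormE 𝕜 (ENNReal.ofReal q) x := by
  unfold weakNormE
  rw [if_neg ENNReal.ofReal_ne_top, ENNReal.toReal_ofReal hq.le]
  refine le_ciSup (f := fun φ : {φ : E →L[𝕜] 𝕜 // ‖φ‖ ≤ 1} =>
    (∑ j, ‖φ.1 (x j)‖ ^ q) ^ (1 / q)) ?_ ⟨φ, hφ⟩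
  refine ⟨(∑ j, ‖x j‖ ^ q) ^ (1 / q), ?_⟩
  rintro _ ⟨ψ, rfl⟩
  simp only
  gcongr with j
  simpa using ψ.1.le_of_opNorm_le ψ.2 (x j)

lemma aux_weak_le (q : ℝ) (hq : 0 < q) {m : ℕ} (x : Fin m → E) (M : ℝ)
    (h : ∀ φ : E →L[𝕜] 𝕜, ‖φ‖ ≤ 1 → (∑ j, ‖φ (x j)‖ ^ q) ^ (1 / q) ≤ M) :
    weakNormE 𝕜 (ENNReal.ofReal q) x ≤ M := by
  unfold weakNormE
  rw [if_neg ENNReal.ofReal_ne_top, ENNReal.toReal_ofReal hq.le]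
  have : Nonempty {φ : E →L[𝕜] 𝕜 // ‖φ‖ ≤ 1} := ⟨⟨0, by simp⟩⟩
  exact ciSup_le fun φ => h φ.1 φ.2

lemma aux_le_weak_one {m : ℕ} (x : Fin m → E) (φ : E →L[𝕜] 𝕜) (hφ : ‖φ‖ ≤ 1) :
    ∑ j, ‖φ (x j)‖ ≤ weakNormE 𝕜 1 x := by
  simpa using aux_le_weak 1 one_pos x φ hφ

lemma aux_weak_one_le {m : ℕ} (x : Fin m → E) (M : ℝ)
    (h : ∀ φ : E →L[𝕜] 𝕜, ‖φ‖ ≤ 1 → ∑ j, ‖φ (x j)‖ ≤ M) :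
    weakNormE 𝕜 1 x ≤ M := by
  simpa using aux_weak_le 1 one_pos x M (by simpa using h)

lemma aux_split (hE : HasCotype2 E) : ∃ K : ℝ, 1 ≤ K ∧ ∀ (m : ℕ), 0 < m → ∀ (x : Fin m → E)
    (q : ℝ), 1 ≤ q → q ≤ 2 → ∃ (μ : Fin m → ℝ) (y : Fin m → E), (∀ j, 0 < μ j) ∧ ∑ j, μ j = 1 ∧
      (∀ j, x j = ((μ j ^ (1 - 1 / q) : ℝ) : 𝕜) • y j) ∧
      weakNormE 𝕜 (ENNReal.ofReal q) y ≤ K * weakNormE 𝕜 1 x := by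
  obtain ⟨C, hC, hcot⟩ := hE
  have hcot' : ∀ (N : ℕ) (y : Fin N → E), ∑ k, ‖y k‖ ^ 2 ≤
      C ^ 2 * ((∑ ε : Fin N → Bool, ‖∑ k, (if ε k then y k else -y k)‖ ^ 2) / 2 ^ N) := by
    intro N y
    have h := hcot N y
    unfold radNorm at h
    rw [← Real.sqrt_eq_rpow, ← Real.sqrt_eq_rpow] at h
    have h1 : 0 ≤ ∑ k, ‖y k‖ ^ 2 := Finset.sum_nonneg fun _ _ => by positivity
    have h2 : 0 ≤ (∑ ε : Fin N → Bool, ‖∑ k, (if ε k then y k else -y k)‖ ^ 2) / (2:ℝ) ^ N :=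
      div_nonneg (Finset.sum_nonneg fun _ _ => by positivity) (by positivity)
    have h3 := pow_le_pow_left₀ (Real.sqrt_nonneg _) h 2
    rwa [mul_pow, Real.sq_sqrt h1, Real.sq_sqrt h2] at h3
  refine ⟨96 * (C ^ 2) ^ 2 + 1, by nlinarith [sq_nonneg (C ^ 2)], ?_⟩
  intro m hm x q hq1 hq2
  set B := weakNormE 𝕜 1 x with hBdef
  have hB0 : 0 ≤ B := aux_weak_nonneg _ _
  have hB : ∀ φ : E →L[𝕜] 𝕜, ‖φ‖ ≤ 1 → ∑ j, ‖φ (x j)‖ ≤ B := fun φ hφ => aux_le_weak_one x φ hφ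
  obtain ⟨ν, hν, hν1, hνK⟩ := aux_pietsch hm x _
    (aux_factor hm x B hB (C ^ 2) (by positivity) hcot')
  have hm' : (0 : ℝ) < m := by exact_mod_cast hm
  let μ : Fin m → ℝ := fun j => (ν j + 1 / m) / 2
  have hμ : ∀ j, 0 < μ j := fun j => by
    have := hν j
    simp only [μ]; positivity
  have hμ1 : ∑ j, μ j = 1 := by
    simp only [μ]
    rw [← Finset.sum_div, Finset.sum_add_distrib, hν1]
    simp
    field_simp; norm_num
  set K : ℝ := 96 * (C ^ 2) ^ 2 + 1 with hKdef
  have hK1 : 1 ≤ K := by rw [hKdef]; nlinarith [sq_nonneg (C ^ 2)]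
  have hμK : ∀ f : Fin m → 𝕜, ‖∑ j, f j • x j‖ ^ 2 ≤ K * B ^ 2 * ∑ j, μ j * ‖f j‖ ^ 2 := by
    intro f
    refine (hνK f).trans ?_
    have h1 : ∑ j, ν j * ‖f j‖ ^ 2 ≤ 2 * ∑ j, μ j * ‖f j‖ ^ 2 := by
      rw [Finset.mul_sum]
      refine Finset.sum_le_sum fun j _ => ?_
      rw [← mul_assoc]
      gcongr
      simp only [μ]
      have : 0 < 1 / (m:ℝ) := by positivity
      linarith
    have h0 : 0 ≤ ∑ j, μ j * ‖f j‖ ^ 2 :=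
      Finset.sum_nonneg fun j _ => mul_nonneg (hμ j).le (by positivity)
    calc _ ≤ 48 * (C ^ 2) ^ 2 * B ^ 2 * (2 * ∑ j, μ j * ‖f j‖ ^ 2) := by gcongr
      _ ≤ _ := by
        rw [hKdef]
        nlinarith [mul_nonneg (sq_nonneg B) h0]
  have hq0 : 0 < q := by linarith
  refine ⟨μ, fun j => ((μ j ^ (-(1 - 1 / q)) : ℝ) : 𝕜) • x j, hμ, hμ1, ?_, ?_⟩
  · intro j
    rw [smul_smul, ← RCLike.ofReal_mul, ← Real.rpow_add (hμ j)]
    simp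
  · refine aux_weak_le q hq0 _ _ fun φ hφ => ?_
    set S := ∑ j, ‖φ (x j)‖ ^ 2 / μ j with hS
    have hS0 : 0 ≤ S := Finset.sum_nonneg fun j _ => div_nonneg (by positivity) (hμ j).le
    have hSK : S ≤ K * B ^ 2 := by
      let f : Fin m → 𝕜 := fun j => (starRingEnd 𝕜) (φ (x j)) * ((μ j)⁻¹ : ℝ)
      have e1 : φ (∑ j, f j • x j) = ((S : ℝ) : 𝕜) := by
        rw [map_sum, hS, RCLike.ofReal_sum]
        refine Finset.sum_congr rfl fun j _ => ?_
        rw [map_smul, smul_eq_mul]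
        simp only [f]
        rw [mul_right_comm, RCLike.conj_mul, div_eq_mul_inv]
        push_cast; rfl
      have e2 : ∑ j, μ j * ‖f j‖ ^ 2 = S := by
        refine Finset.sum_congr rfl fun j _ => ?_
        have := (hμ j).ne'
        simp only [f, norm_mul, RCLike.norm_conj, RCLike.norm_ofReal, mul_pow, sq_abs]
        field_simp
      have h1 : S ≤ ‖∑ j, f j • x j‖ := by
        have := φ.le_of_opNorm_le hφ (∑ j, f j • x j)
        rw [e1, RCLike.norm_ofReal, abs_of_nonneg hS0] at this
        simpa using this
      have h2 := hμK f
      rw [e2] at h2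
      have h3 : S ^ 2 ≤ K * B ^ 2 * S := (pow_le_pow_left₀ hS0 h1 2).trans h2
      rcases hS0.eq_or_lt with h | h
      · rw [← h]; positivity
      · nlinarith
    have key : ∑ j, ‖φ (((μ j ^ (-(1 - 1 / q)) : ℝ) : 𝕜) • x j)‖ ^ q ≤
        S ^ (q - 1) * (∑ j, ‖φ (x j)‖) ^ (2 - q) := by
      refine le_trans (le_of_eq ?_) (aux_holder (fun j => ‖φ (x j)‖ ^ 2 / μ j)
        (fun j => ‖φ (x j)‖) (fun j => div_nonneg (by positivity) (hμ j).le)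
        (fun j => norm_nonneg _) (q - 1) (2 - q) (by linarith) (by linarith) (by ring))
      refine Finset.sum_congr rfl fun j _ => ?_
      rw [map_smul, norm_smul, RCLike.norm_ofReal, abs_of_nonneg (Real.rpow_nonneg (hμ j).le _),
        Real.mul_rpow (Real.rpow_nonneg (hμ j).le _) (norm_nonneg _), ← Real.rpow_mul (hμ j).le,
        Real.div_rpow (by positivity) (hμ j).le, ← Real.rpow_natCast, ← Real.rpow_mul (norm_nonneg _)]
      have e : -(1 - 1 / q) * q = -(q - 1) := by field_simp
      rw [e, Real.rpow_neg (hμ j).le]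
      have e3 : ‖φ (x j)‖ ^ q = ‖φ (x j)‖ ^ (((2:ℕ):ℝ) * (q - 1)) * ‖φ (x j)‖ ^ (2 - q) := by
        rw [← Real.rpow_add_of_nonneg (norm_nonneg _) (by push_cast; linarith) (by linarith)]
        congr 1; push_cast; ring
      rw [e3]
      field_simp
    have hφB := hB φ hφ
    have hφ0 : 0 ≤ ∑ j, ‖φ (x j)‖ := Finset.sum_nonneg fun _ _ => norm_nonneg _
    have key2 : S ^ (q - 1) * (∑ j, ‖φ (x j)‖) ^ (2 - q) ≤ (K * B) ^ q := by
      calc _ ≤ (K * B ^ 2) ^ (q - 1) * B ^ (2 - q) := by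
            gcongr
        _ = K ^ (q - 1) * B ^ q := by
            rw [Real.mul_rpow (by linarith) (by positivity), ← Real.rpow_natCast,
              ← Real.rpow_mul hB0, mul_assoc, ← Real.rpow_add_of_nonneg hB0
              (by push_cast; linarith) (by linarith)]
            congr 2; push_cast; ring
        _ ≤ K ^ q * B ^ q := by
            gcongr
            linarith
        _ = _ := by rw [Real.mul_rpow (by linarith) hB0]
    have hKB : 0 ≤ K * B := by positivity
    calc _ ≤ ((K * B) ^ q) ^ (1 / q) := by
          refine Real.rpow_le_rpow ?_ (key.trans key2) (by positivity)
          exact Finset.sum_nonneg fun _ _ => Real.rpow_nonneg (norm_nonneg _) _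
      _ = K * B := by
          rw [← Real.rpow_mul hKB, mul_one_div_cancel hq0.ne', Real.rpow_one]

end weak

/-- If `E₁, …, E_k` have cotype 2, `p ≤ q`, `1 ≤ q_i ≤ 2` for `i ≤ k`, and
`∑_{i≤k} 1/q_i − 1/q = k − 1/p`, then for arbitrary exponents `p_{k+1}, …, p_n ∈ [1,∞]`, a
continuous `n`-linear map is absolutely `(p; 1, …, 1, p_{k+1}, …, p_n)`-summing iff it is
absolutely `(q; q₁, …, q_k, p_{k+1}, …, p_n)`-summing. -/
theorem cotype2_exponent_shift {𝕜 : Type*} [RCLike 𝕜] {n k : ℕ} (hk : 1 ≤ k) (hkn : k ≤ n)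
    (E : Fin n → Type*) [∀ i, NormedAddCommGroup (E i)] [∀ i, NormedSpace 𝕜 (E i)]
    [∀ i, CompleteSpace (E i)]
    (hcot : ∀ i : Fin n, i.val < k → HasCotype2 (E i))
    (F : Type*) [NormedAddCommGroup F] [NormedSpace 𝕜 F] [CompleteSpace F]
    (p q : ℝ) (hp : 0 < p) (hpq : p ≤ q)
    (qs : Fin n → ℝ) (hqs : ∀ i : Fin n, i.val < k → 1 ≤ qs i ∧ qs i ≤ 2)
    (ps : Fin n → ℝ≥0∞) (hps : ∀ i : Fin n, k ≤ i.val → 1 ≤ ps i)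
    (heq : (∑ i ∈ Finset.univ.filter (fun i : Fin n => i.val < k), 1 / qs i) - 1 / q
      = (k : ℝ) - 1 / p)
    (A : ContinuousMultilinearMap 𝕜 E F) :
    IsAbsSummingE (ENNReal.ofReal p) (fun i => if i.val < k then 1 else ps i) A ↔
      IsAbsSummingE (ENNReal.ofReal q)
        (fun i => if i.val < k then ENNReal.ofReal (qs i) else ps i) A := by
  classical
  have hq : 0 < q := hp.trans_le hpq
  have hpr : (ENNReal.ofReal p).toReal = p := ENNReal.toReal_ofReal hp.le
  have hqr : (ENNReal.ofReal q).toReal = q := ENNReal.toReal_ofReal hq.le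
  let t : Fin n → ℝ := fun i => if i.val < k then 1 - 1 / qs i else 0
  have ht0 : ∀ i, 0 ≤ t i := by
    intro i
    simp only [t]
    split_ifs with h
    · have h1 := (hqs i h).1
      have : 1 / qs i ≤ 1 := by rw [div_le_one (by linarith)]; exact h1
      linarith
    · exact le_rfl
  have hts : ∑ i, t i = 1 / p - 1 / q := by
    simp only [t]
    rw [← Finset.sum_filter, Finset.sum_sub_distrib]
    have hcard : (Finset.univ.filter (fun i : Fin n => i.val < k)).card = k := by
      rw [Fin.card_filter_val_lt]; omega
    simp only [Finset.sum_const, hcard, nsmul_eq_mul, mul_one]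
    linarith
  constructor
  · rintro ⟨C, hC, hA⟩
    refine ⟨C, hC, fun m x => ?_⟩
    set W := ∏ i, weakNormE 𝕜 (if i.val < k then ENNReal.ofReal (qs i) else ps i) (x i) with hW
    have hW0 : 0 ≤ W := Finset.prod_nonneg fun i _ => aux_weak_nonneg _ _
    let a : Fin m → ℝ := fun j => ‖A (fun i => x i j)‖
    have ha : ∀ j, 0 ≤ a j := fun j => norm_nonneg _
    set S := ∑ j, a j ^ q with hS
    have hS0 : 0 ≤ S := Finset.sum_nonneg fun j _ => Real.rpow_nonneg (ha j) _
    have hgoal : lpNormE (ENNReal.ofReal q) (fun j => A (fun i => x i j)) = S ^ (1 / q) := by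
      unfold lpNormE
      rw [if_neg ENNReal.ofReal_ne_top, hqr]
    rw [hgoal]
    rcases hS0.eq_or_lt with h0 | hSpos
    · rw [← h0, Real.zero_rpow (by positivity)]
      positivity
    let z : ∀ i, Fin m → E i := fun i j => ((a j ^ (q * t i) : ℝ) : 𝕜) • x i j
    have hAz : ∀ j, ‖A (fun i => z i j)‖ ^ p = a j ^ q := by
      intro j
      simp only [z]
      rw [A.map_smul_univ, norm_smul, norm_prod]
      have e : ∀ i, ‖((a j ^ (q * t i) : ℝ) : 𝕜)‖ = a j ^ (q * t i) := fun i => by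
        rw [RCLike.norm_ofReal, abs_of_nonneg (Real.rpow_nonneg (ha j) _)]
      simp only [e]
      change ((∏ i, a j ^ (q * t i)) * a j) ^ p = a j ^ q
      rcases (ha j).eq_or_lt with h | h
      · rw [← h, mul_zero, Real.zero_rpow hp.ne', Real.zero_rpow hq.ne']
      · rw [← Real.rpow_sum_of_pos h, ← Finset.mul_sum, hts]
        nth_rewrite 2 [← Real.rpow_one (a j)]
        rw [← Real.rpow_add h, ← Real.rpow_mul h.le]
        congr 1
        field_simp
        ring
    have hzw : ∀ i, weakNormE 𝕜 (if i.val < k then 1 else ps i) (z i) ≤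
        S ^ t i * weakNormE 𝕜 (if i.val < k then ENNReal.ofReal (qs i) else ps i) (x i) := by
      intro i
      by_cases h : i.val < k
      · simp only [h, if_true]
        obtain ⟨h1, h2⟩ := hqs i h
        have hti : t i = 1 - 1 / qs i := by simp [t, h]
        have hq0 : 0 < qs i := by linarith
        refine aux_weak_one_le _ _ fun φ hφ => ?_
        refine le_trans ?_ (mul_le_mul_of_nonneg_left (aux_le_weak (qs i) hq0 (x i) φ hφ)
          (Real.rpow_nonneg hS0 _))
        refine le_trans (le_of_eq ?_) (aux_holder (fun j => a j ^ q)
          (fun j => ‖φ (x i j)‖ ^ qs i) (fun j => Real.rpow_nonneg (ha j) _)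
          (fun j => Real.rpow_nonneg (norm_nonneg _) _) (t i) (1 / qs i) (ht0 i)
          (by positivity) (by rw [hti]; ring))
        refine Finset.sum_congr rfl fun j _ => ?_
        simp only [z]
        rw [map_smul, norm_smul, RCLike.norm_ofReal, abs_of_nonneg (Real.rpow_nonneg (ha j) _),
          Real.rpow_mul (ha j), ← Real.rpow_mul (norm_nonneg (φ (x i j))),
          mul_one_div_cancel hq0.ne', Real.rpow_one]
      · have hti : t i = 0 := by simp [t, h]
        have hz : z i = x i := by
          ext j; simp [z, hti]
        simp [h, hti, hz]
    have hmain := hA m z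
    have hl : lpNormE (ENNReal.ofReal p) (fun j => A (fun i => z i j)) = S ^ (1 / p) := by
      unfold lpNormE
      rw [if_neg ENNReal.ofReal_ne_top, hpr]
      simp only [hAz]
      rfl
    rw [hl] at hmain
    have h1 : ∏ i, weakNormE 𝕜 (if i.val < k then 1 else ps i) (z i) ≤
        S ^ (1 / p - 1 / q) * W := by
      rw [← hts, Real.rpow_sum_of_pos hSpos, hW, ← Finset.prod_mul_distrib]
      exact Finset.prod_le_prod (fun i _ => aux_weak_nonneg _ _) fun i _ => hzw i
    have h2 : S ^ (1 / p) ≤ C * (S ^ (1 / p - 1 / q) * W) :=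
      hmain.trans (mul_le_mul_of_nonneg_left h1 hC.le)
    have h3 : S ^ (1 / p) = S ^ (1 / p - 1 / q) * S ^ (1 / q) := by
      rw [← Real.rpow_add hSpos]; congr 1; ring
    have h4 : 0 < S ^ (1 / p - 1 / q) := Real.rpow_pos_of_pos hSpos _
    rw [h3] at h2
    refine le_of_mul_le_mul_left ?_ h4
    linarith
  · rintro ⟨C, hC, hA⟩
    have hsplit : ∀ i : Fin n, ∃ K : ℝ, 1 ≤ K ∧ ∀ (m : ℕ), 0 < m → ∀ (x : Fin m → E i),
        ∃ (μ : Fin m → ℝ) (y : Fin m → E i), (∀ j, 0 < μ j) ∧ ∑ j, μ j = 1 ∧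
        (∀ j, x j = ((μ j ^ t i : ℝ) : 𝕜) • y j) ∧
        weakNormE 𝕜 (if i.val < k then ENNReal.ofReal (qs i) else ps i) y ≤
          K * weakNormE 𝕜 (if i.val < k then 1 else ps i) x := by
      intro i
      by_cases h : i.val < k
      · obtain ⟨K, hK, hs⟩ := aux_split (𝕜 := 𝕜) (hcot i h)
        refine ⟨K, hK, fun m hm x => ?_⟩
        have hti : t i = 1 - 1 / qs i := by simp [t, h]
        rw [hti]
        simpa only [h, if_true] using hs m hm x (qs i) (hqs i h).1 (hqs i h).2
      · refine ⟨1, le_rfl, fun m hm x => ⟨fun _ => 1 / m, x, ?_, ?_, ?_, ?_⟩⟩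
        · intro j; positivity
        · have : (m : ℝ) ≠ 0 := by positivity
          simp [this]
        · intro j
          simp [t, h]
        · simp [h]
    choose K hK hs using hsplit
    have hKp : 0 < ∏ i, K i := Finset.prod_pos fun i _ => by linarith [hK i]
    refine ⟨C * ∏ i, K i, by positivity, fun m x => ?_⟩
    rcases Nat.eq_zero_or_pos m with h0 | hm
    · subst h0
      have : lpNormE (ENNReal.ofReal p) (fun j => A (fun i => x i j)) = 0 := by
        unfold lpNormE
        rw [if_neg ENNReal.ofReal_ne_top, hpr]
        simp [hp.ne']
      rw [this]
      exact mul_nonneg (by positivity) (Finset.prod_nonneg fun i _ => aux_weak_nonneg _ _)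
    choose μ y hμ hμ1 hxy hyw using fun i => hs i m hm (x i)
    have hmain := hA m y
    let a : Fin m → ℝ := fun j => ‖A (fun i => y i j)‖
    have ha : ∀ j, 0 ≤ a j := fun j => norm_nonneg _
    set τ := 1 / p - 1 / q with hτ
    have hτ0 : 0 ≤ τ := hts ▸ Finset.sum_nonneg fun i _ => ht0 i
    -- a dominating weight
    obtain ⟨ν, hν0, hν1, hν⟩ : ∃ ν : Fin m → ℝ, (∀ j, 0 ≤ ν j) ∧ ∑ j, ν j ≤ 1 ∧
        ∀ j, ∏ i, μ i j ^ t i ≤ ν j ^ τ := by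
      rcases hτ0.eq_or_lt with h | hτpos
      · refine ⟨fun _ => 0, fun _ => le_rfl, by simp, fun j => ?_⟩
        have htz : ∀ i, t i = 0 := by
          intro i
          have := (Finset.sum_eq_zero_iff_of_nonneg (fun i _ => ht0 i)).1 (hts.trans h.symm)
          exact this i (Finset.mem_univ i)
        simp [htz, ← h]
      · refine ⟨fun j => ∑ i, t i / τ * μ i j, fun j => Finset.sum_nonneg fun i _ =>
          mul_nonneg (div_nonneg (ht0 i) hτ0) (hμ i j).le, ?_, fun j => ?_⟩
        · rw [Finset.sum_comm]
          simp only [← Finset.mul_sum, hμ1, mul_one]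
          rw [← Finset.sum_div, hts, div_self hτpos.ne']
        · have h1 := Real.geom_mean_le_arith_mean_weighted Finset.univ (fun i => t i / τ)
            (fun i => μ i j) (fun i _ => div_nonneg (ht0 i) hτ0)
            (by rw [← Finset.sum_div, hts, div_self hτpos.ne']) (fun i _ => (hμ i j).le)
          have h2 : ∏ i, μ i j ^ t i = (∏ i, μ i j ^ (t i / τ)) ^ τ := by
            rw [← Real.finsetProd_rpow _ _ (fun i _ => Real.rpow_nonneg (hμ i j).le _)]
            refine Finset.prod_congr rfl fun i _ => ?_
            rw [← Real.rpow_mul (hμ i j).le, div_mul_cancel₀ _ hτpos.ne']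
          rw [h2]
          exact Real.rpow_le_rpow (Finset.prod_nonneg fun i _ => Real.rpow_nonneg (hμ i j).le _)
            h1 hτ0
    have hAx : ∀ j, ‖A (fun i => x i j)‖ ^ p ≤ ν j ^ (τ * p) * (a j ^ q) ^ (p / q) := by
      intro j
      have e0 : (fun i => x i j) = fun i => ((μ i j ^ t i : ℝ) : 𝕜) • y i j :=
        funext fun i => hxy i j
      rw [e0, A.map_smul_univ, norm_smul, norm_prod]
      have e : ∀ i, ‖((μ i j ^ t i : ℝ) : 𝕜)‖ = μ i j ^ t i := fun i => by
        rw [RCLike.norm_ofReal, abs_of_nonneg (Real.rpow_nonneg (hμ i j).le _)]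
      simp only [e]
      have hpr0 : 0 ≤ ∏ i, μ i j ^ t i :=
        Finset.prod_nonneg fun i _ => Real.rpow_nonneg (hμ i j).le _
      rw [Real.mul_rpow hpr0 (norm_nonneg _), Real.rpow_mul (hν0 j), ← Real.rpow_mul (ha j),
        mul_div_cancel₀ _ hq.ne']
      exact mul_le_mul_of_nonneg_right (Real.rpow_le_rpow hpr0 (hν j) hp.le)
        (Real.rpow_nonneg (ha j) _)
    set S := ∑ j, a j ^ q with hS
    have hS0 : 0 ≤ S := Finset.sum_nonneg fun j _ => Real.rpow_nonneg (ha j) _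
    have hsum : ∑ j, ‖A (fun i => x i j)‖ ^ p ≤ S ^ (p / q) := by
      refine (Finset.sum_le_sum fun j _ => hAx j).trans ?_
      refine (aux_holder ν (fun j => a j ^ q) hν0 (fun j => Real.rpow_nonneg (ha j) _)
        (τ * p) (p / q) (by positivity) (by positivity) (by rw [hτ]; field_simp; ring)).trans ?_
      have h1 : (∑ j, ν j) ^ (τ * p) ≤ 1 :=
        Real.rpow_le_one (Finset.sum_nonneg fun j _ => hν0 j) hν1 (by positivity)
      exact mul_le_of_le_one_left (Real.rpow_nonneg hS0 _) h1
    have hl : lpNormE (ENNReal.ofReal q) (fun j => A (fun i => y i j)) = S ^ (1 / q) := by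
      unfold lpNormE
      rw [if_neg ENNReal.ofReal_ne_top, hqr]
    have hg : lpNormE (ENNReal.ofReal p) (fun j => A (fun i => x i j)) ≤ S ^ (1 / q) := by
      unfold lpNormE
      rw [if_neg ENNReal.ofReal_ne_top, hpr]
      calc _ ≤ (S ^ (p / q)) ^ (1 / p) := by
            refine Real.rpow_le_rpow ?_ hsum (by positivity)
            exact Finset.sum_nonneg fun _ _ => Real.rpow_nonneg (norm_nonneg _) _
        _ = _ := by
            rw [← Real.rpow_mul hS0]
            congr 1
            field_simp
    rw [hl] at hmain
    refine hg.trans (hmain.trans ?_)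
    rw [mul_assoc, ← Finset.prod_mul_distrib]
    refine mul_le_mul_of_nonneg_left ?_ hC.le
    exact Finset.prod_le_prod (fun i _ => aux_weak_nonneg _ _) fun i _ => hyw i
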